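/- arXiv:2112.07420 — 2 statements merged into one kernel-verified Lean document; each statement's English description precedes it below -/
import Mathlib

section
/- Let A ⊆ B be a C*-inclusion. Then A separates ideals in B if and only if for every restricted ideal I of A and every ideal K of B with BIB ⊊ K one has I ⊊ K ∩ A. (The latter condition expresses that A/I detects ideals in the quotient B/BIB for every restricted ideal I of A.) -/
/- Common definitions for C*-inclusions, ideals, Cuntz subequivalence,
   supporting/filling families and pure infiniteness. -/

namespace KM

variable {B : Type*} [NonUnitalCStarAlgebra B] [PartialOrder B]

/-- `J` is a closed two-sided ideal of the C*-algebra `C` (given as a subset of `B`). -/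
def IsIdealIn (C J : Set B) : Prop :=
  J ⊆ C ∧ IsClosed J ∧ (0 : B) ∈ J ∧ (∀ x ∈ J, ∀ y ∈ J, x + y ∈ J) ∧
    (∀ (c : ℂ), ∀ x ∈ J, c • x ∈ J) ∧ (∀ x ∈ J, ∀ c ∈ C, c * x ∈ J ∧ x * c ∈ J)

/-- `J` is a closed two-sided ideal of `B`. -/
def IsIdeal (J : Set B) : Prop := IsIdealIn Set.univ J

/-- `A` is a C*-subalgebra of `B`: a closed `*`-subalgebra. -/
def IsSubCStar (A : Set B) : Prop :=
  IsClosed A ∧ (0 : B) ∈ A ∧ (∀ x ∈ A, ∀ y ∈ A, x + y ∈ A) ∧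
    (∀ (c : ℂ), ∀ x ∈ A, c • x ∈ A) ∧ (∀ x ∈ A, ∀ y ∈ A, x * y ∈ A) ∧
    (∀ x ∈ A, star x ∈ A)

/-- The smallest closed two-sided ideal of the C*-algebra `C` containing `S`. -/
def idealGenIn (C S : Set B) : Set B := ⋂₀ {J : Set B | IsIdealIn C J ∧ S ⊆ J}

/-- The smallest closed two-sided ideal of `B` containing `S`; for an ideal `I` of a
subalgebra `A` this is the induced ideal `BIB`. -/
def idealGen (S : Set B) : Set B := idealGenIn Set.univ S

/-- `I` is a restricted ideal of the subalgebra `A`, i.e. `I = J ∩ A` for an ideal `J` of `B`. -/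
def IsRestricted (A I : Set B) : Prop := ∃ J : Set B, IsIdeal J ∧ I = J ∩ A

/-- `J` is an induced ideal of `B`: `J = BIB` for some ideal `I` of `A`. -/
def IsInduced (A J : Set B) : Prop := ∃ I : Set B, IsIdealIn A I ∧ J = idealGen I

/-- `A` separates ideals in `B`. -/
def SeparatesIdeals (A : Set B) : Prop :=
  ∀ J₁ J₂ : Set B, IsIdeal J₁ → IsIdeal J₂ → J₁ ∩ A = J₂ ∩ A → J₁ = J₂

/-- Cuntz subequivalence `a ≼ b`. -/
def CuntzBelow (a b : B) : Prop :=
  ∀ ε : ℝ, 0 < ε → ∃ x : B, ‖a - star x * b * x‖ < ε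

/-- `F` supports `B`. -/
def Supports (F : Set B) : Prop :=
  ∀ b : B, 0 ≤ b → b ≠ 0 → ∃ a ∈ F, a ≠ 0 ∧ CuntzBelow a b

/-- `F` residually supports the C*-algebra `C ⊆ B`: for every ideal `J` of `C`, the image
of `F` in `C/J` supports `C/J`, phrased concretely via the distance to `J`. -/
def ResiduallySupportsIn (C F : Set B) : Prop :=
  ∀ J : Set B, IsIdealIn C J → ∀ b ∈ C, 0 ≤ b → b ∉ J →
    ∃ a ∈ F, a ∉ J ∧ ∀ ε : ℝ, 0 < ε → ∃ x ∈ C,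
      Metric.infDist (a - star x * b * x) J < ε

/-- `F` residually supports `B`. -/
def ResiduallySupports (F : Set B) : Prop := ResiduallySupportsIn Set.univ F

/-- `x` lies in `aB = {a c : c ∈ B}`. -/
def MemRightMul (a x : B) : Prop := ∃ c : B, x = a * c

/-- `a` is properly infinite in `B`. -/
def ProperlyInfinite (a : B) : Prop :=
  ∀ ε : ℝ, 0 < ε → ∃ x y : B, MemRightMul a x ∧ MemRightMul a y ∧
    ‖star x * x - a‖ ≤ ε ∧ ‖star y * y - a‖ ≤ ε ∧ ‖star x * y‖ ≤ ε

/-- `a` is infinite in `B`. -/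
def InfiniteElt (a : B) : Prop :=
  ∃ b : B, 0 ≤ b ∧ b ≠ 0 ∧ ∀ ε : ℝ, 0 < ε → ∃ x y : B,
    MemRightMul a x ∧ MemRightMul a y ∧
    ‖star x * x - a‖ ≤ ε ∧ ‖star y * y - b‖ ≤ ε ∧ ‖star x * y‖ ≤ ε

/-- The pair `a, b` is separated in `B`. -/
def SeparatedPair (a b : B) : Prop :=
  ∀ ε : ℝ, 0 < ε → ∃ x y : B, MemRightMul a x ∧ MemRightMul b y ∧
    ‖star x * x - a‖ ≤ ε ∧ ‖star y * y - b‖ ≤ ε ∧ ‖star x * y‖ ≤ ε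

/-- A character of `B`: a nonzero multiplicative linear functional `B → ℂ`. -/
def IsCharacter (φ : B →ₗ[ℂ] ℂ) : Prop :=
  (∀ x y : B, φ (x * y) = φ x * φ y) ∧ φ ≠ 0

/-- `B` is purely infinite: it admits no characters and for nonzero positive `a, b`,
`a ≼ b` iff `a` lies in the ideal generated by `b`. -/
def PurelyInfinite (B : Type*) [NonUnitalCStarAlgebra B] [PartialOrder B] : Prop :=
  (¬ ∃ φ : B →ₗ[ℂ] ℂ, IsCharacter φ) ∧
    ∀ a b : B, 0 ≤ a → a ≠ 0 → 0 ≤ b → b ≠ 0 → (CuntzBelow a b ↔ a ∈ idealGen {b})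

/-- `p` is a projection. -/
def IsProjection (p : B) : Prop := star p = p ∧ p * p = p

/-- `B` has the ideal property: projections separate ideals. -/
def IdealProperty (B : Type*) [NonUnitalCStarAlgebra B] [PartialOrder B] : Prop :=
  ∀ J₁ J₂ : Set B, IsIdeal J₁ → IsIdeal J₂ →
    (∀ p : B, IsProjection p → (p ∈ J₁ ↔ p ∈ J₂)) → J₁ = J₂

/-- `B` is strongly purely infinite: every pair of positive elements is separated. -/
def StronglyPurelyInfinite (B : Type*) [NonUnitalCStarAlgebra B] [PartialOrder B] : Prop :=
  ∀ a b : B, 0 ≤ a → 0 ≤ b → SeparatedPair a b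

/-- `D` is a hereditary C*-subalgebra of `B`. -/
def IsHereditary (D : Set B) : Prop :=
  IsSubCStar D ∧ ∀ b d : B, d ∈ D → 0 ≤ b → b ≤ d → b ∈ D

/-- `F` fills `B`. -/
def Fills (F : Set B) : Prop :=
  ∀ D : Set B, IsHereditary D → (∃ d ∈ D, d ≠ 0) →
    ∀ J : Set B, IsIdeal J → ¬ D ⊆ J →
      ∃ z : B, z ∉ J ∧ z * star z ∈ D ∧ star z * z ∈ F

/-- Closed linear span of a subset of `B`. -/
def closSpan (S : Set B) : Set B := closure ↑(Submodule.span ℂ S)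

/-- The C*-inclusion `A ⊆ B` is symmetric. -/
def SymmetricInclusion (A : Set B) : Prop :=
  ∀ I : Set B, IsRestricted A I →
    closSpan {z : B | ∃ x ∈ I, ∃ b : B, z = x * b} =
      closSpan {z : B | ∃ b : B, ∃ x ∈ I, z = b * x}

/-- `b` is a normaliser of `A` in `B`. -/
def IsNormalizer (A : Set B) (b : B) : Prop :=
  (∀ a ∈ A, b * a * star b ∈ A) ∧ (∀ a ∈ A, star b * a * b ∈ A)

/-- The inclusion `A ⊆ B` is nondegenerate: the closed span of `A·B` is `B`. -/
def Nondegenerate (A : Set B) : Prop :=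
  closSpan {z : B | ∃ a ∈ A, ∃ b : B, z = a * b} = Set.univ

/-- The inclusion `A ⊆ B` is regular: nondegenerate and `B` is the closed linear span of
the normalisers of `A`. -/
def RegularInclusion (A : Set B) : Prop :=
  Nondegenerate A ∧ closSpan {b : B | IsNormalizer A b} = Set.univ

end KM

open KM

variable {B : Type*} [NonUnitalCStarAlgebra B] [PartialOrder B] [StarOrderedRing B]

/-!
Induction `i` is left adjoint to restriction `r`, so `r ∘ i ∘ r = r`, and `r` is injective exactly
when `i (r J) = J` for every ideal `J` of `B`. If this fails for some `J`, then `I = r J` and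
`K = J` satisfy `BIB ⊊ K` but `I = K ∩ A`; conversely `I = K ∩ A` forces `BIB = i (r K) = K`.
-/

namespace KM

open Set

variable {B : Type*} [NonUnitalCStarAlgebra B] {A C I J S : Set B}

theorem isIdeal_univ : IsIdeal (univ : Set B) :=
  ⟨Subset.rfl, isClosed_univ, mem_univ _, fun _ _ _ _ => mem_univ _, fun _ _ _ => mem_univ _,
    fun _ _ _ _ => ⟨mem_univ _, mem_univ _⟩⟩

theorem IsIdealIn.sInter {𝒥 : Set (Set B)} (hne : 𝒥.Nonempty) (h𝒥 : ∀ J ∈ 𝒥, IsIdealIn C J) :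
    IsIdealIn C (⋂₀ 𝒥) := by
  obtain ⟨J₀, hJ₀⟩ := hne
  refine ⟨(sInter_subset_of_mem hJ₀).trans (h𝒥 J₀ hJ₀).1, isClosed_sInter fun J hJ => ?_,
    fun J hJ => ?_, fun x hx y hy J hJ => ?_, fun c x hx J hJ => ?_,
    fun x hx c hc => ⟨fun J hJ => ?_, fun J hJ => ?_⟩⟩ <;>
    obtain ⟨-, hclosed, hzero, hadd, hsmul, hmul⟩ := h𝒥 J hJ
  · exact hclosed
  · exact hzero
  · exact hadd x (hx J hJ) y (hy J hJ)
  · exact hsmul c x (hx J hJ)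
  · exact (hmul x (hx J hJ) c hc).1
  · exact (hmul x (hx J hJ) c hc).2

theorem isIdealIn_idealGenIn (hC : IsIdealIn C C) (hS : S ⊆ C) : IsIdealIn C (idealGenIn C S) :=
  IsIdealIn.sInter ⟨C, hC, hS⟩ fun _ hJ => hJ.1

theorem isIdeal_idealGen (S : Set B) : IsIdeal (idealGen S) :=
  isIdealIn_idealGenIn isIdeal_univ (subset_univ S)

theorem subset_idealGenIn (C S : Set B) : S ⊆ idealGenIn C S :=
  subset_sInter fun _ hJ => hJ.2

theorem IsIdealIn.idealGenIn_subset_iff (hJ : IsIdealIn C J) : idealGenIn C S ⊆ J ↔ S ⊆ J :=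
  ⟨(subset_idealGenIn C S).trans, fun hS => sInter_subset_of_mem ⟨hJ, hS⟩⟩

theorem IsIdeal.idealGen_inter_subset (hJ : IsIdeal J) (A : Set B) : idealGen (J ∩ A) ⊆ J :=
  hJ.idealGenIn_subset_iff.2 inter_subset_left

theorem IsRestricted.idealGen_inter_eq (hI : IsRestricted A I) : idealGen I ∩ A = I := by
  obtain ⟨J, hJ, rfl⟩ := hI
  exact (inter_subset_inter_left A (hJ.idealGen_inter_subset A)).antisymm
    (subset_inter (subset_idealGenIn univ _) inter_subset_right)

theorem separatesIdeals_iff_idealGen_inter_eq :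
    SeparatesIdeals A ↔ ∀ J, IsIdeal J → idealGen (J ∩ A) = J := by
  constructor
  · intro hsep J hJ
    have hJA : IsRestricted A (J ∩ A) := ⟨J, hJ, rfl⟩
    exact hsep _ J (isIdeal_idealGen _) hJ hJA.idealGen_inter_eq
  · intro hind J₁ J₂ hJ₁ hJ₂ heq
    calc
      J₁ = idealGen (J₁ ∩ A) := (hind J₁ hJ₁).symm
      _ = idealGen (J₂ ∩ A) := by rw [heq]
      _ = J₂ := hind J₂ hJ₂

end KM

theorem stmt4_general {B : Type*} [NonUnitalCStarAlgebra B] (A : Set B) :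
    SeparatesIdeals A ↔
      ∀ I : Set B, IsRestricted A I → ∀ K : Set B, IsIdeal K →
        idealGen I ⊂ K → I ⊂ K ∩ A := by
  rw [separatesIdeals_iff_idealGen_inter_eq]
  constructor
  · rintro hind _ ⟨J, -, rfl⟩ K hK hlt
    have hsub : J ∩ A ⊆ K ∩ A :=
      Set.subset_inter ((subset_idealGenIn _ _).trans hlt.subset) Set.inter_subset_right
    refine hsub.ssubset_of_ne fun heq => hlt.ne ?_
    rw [heq, hind K hK]
  · intro h J hJ
    by_contra hne
    have hlt : idealGen (J ∩ A) ⊂ J := (hJ.idealGen_inter_subset A).ssubset_of_ne hne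
    exact (h (J ∩ A) ⟨J, hJ, rfl⟩ J hJ hlt).ne rfl

/-- `A` separates ideals in `B` iff for every restricted ideal `I` of `A` and every ideal
`K` of `B` with `BIB ⊊ K` one has `I ⊊ K ∩ A`. -/
theorem stmt4 (A : Set B) (hA : IsSubCStar A) :
    SeparatesIdeals A ↔
      ∀ I : Set B, IsRestricted A I → ∀ K : Set B, IsIdeal K →
        idealGen I ⊂ K → I ⊂ K ∩ A :=
  stmt4_general A
end

section
/- Let B be a C*-algebra and F ⊆ B⁺. (1) If F supports B, then for every ideal J of B and every nonzero b ∈ J⁺ there is a nonzero a ∈ F ∩ J with a ≼ b; in particular, every nonzero ideal of B contains a nonzero element of F. (2) If F residually supports B, then for every ideal J of B the set F ∩ J residually supports J, in the sense that for every ideal I of B with I ⊆ J and every b ∈ J⁺ with b ∉ I there is a ∈ F ∩ J with a ∉ I such that for every ε > 0 there is x ∈ B with dist(a − x* b x, I) < ε; moreover, F separates the ideals of B: any two ideals J₁ ≠ J₂ of B satisfy J₁ ∩ F ≠ J₂ ∩ F. -/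
open KM

variable {B : Type*} [NonUnitalCStarAlgebra B] [PartialOrder B] [StarOrderedRing B]

/-!
Everything rests on two facts about a closed ideal `J`. If `b ∈ J` and `a` is approximated, modulo
elements of `J`, by the elements `x* b x`, then `a ∈ J`; so every element of `F` that is Cuntz below
some `b ∈ J` lies in `J`. And `x* x ∈ J` forces `x ∈ J`, so ideals are told apart by their positive
elements. The second fact holds because `x` is a limit of elements `x (x* x) y`: with `h = x* x` and
`y = k(h)`, the C*-identity gives `‖x - x h k(h)‖² = ‖h (1 - h k(h))²‖`, which is small once
`t k(t)` is close to `1` away from `t = 0`.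
-/

section FunctionalCalculus

theorem cfcₙ_mul_one_sub {R A : Type*} {p : A → Prop} [CommRing R] [Nontrivial R] [StarRing R]
    [MetricSpace R] [IsTopologicalRing R] [ContinuousStar R] [NonUnitalRing A] [StarRing A]
    [TopologicalSpace A] [Module R A] [IsScalarTower R A A] [SMulCommClass R A A]
    [NonUnitalContinuousFunctionalCalculus R A p] {f g : R → R} {a : A}
    (hf : ContinuousOn f (quasispectrum R a)) (hf₀ : f 0 = 0)
    (hg : ContinuousOn g (quasispectrum R a)) (hg₀ : g 0 = 0) :
    cfcₙ (fun t ↦ f t * (1 - g t)) a = cfcₙ f a - cfcₙ f a * cfcₙ g a := by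
  simp only [mul_sub, mul_one]
  rw [cfcₙ_sub f (fun t ↦ f t * g t) a, cfcₙ_mul f g a]

theorem star_mul_self_sub_mul_cfcₙ {A : Type*} [NonUnitalRing A] [StarRing A] [TopologicalSpace A]
    [Module ℝ A] [IsScalarTower ℝ A A] [SMulCommClass ℝ A A]
    [NonUnitalContinuousFunctionalCalculus ℝ A IsSelfAdjoint] {g : ℝ → ℝ} (x : A)
    (hg : ContinuousOn g (quasispectrum ℝ (star x * x))) (hg₀ : g 0 = 0) :
    star (x - x * cfcₙ g (star x * x)) * (x - x * cfcₙ g (star x * x)) =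
      cfcₙ (fun t ↦ t * (1 - g t) ^ 2) (star x * x) := by
  simp only [sq, ← mul_assoc]
  have hsa : IsSelfAdjoint (star x * x) := .star_mul_self x
  have hcomm : Commute (cfcₙ g (star x * x)) (star x * x) := by
    simpa only [cfcₙ_id' ℝ (star x * x)] using
      cfcₙ_commute_cfcₙ g (fun t : ℝ ↦ t) (star x * x)
  rw [cfcₙ_mul_one_sub (by fun_prop) (by simp) hg hg₀,
    cfcₙ_mul_one_sub (by fun_prop) rfl hg hg₀, cfcₙ_id' ℝ (star x * x), star_sub, star_mul,
    IsSelfAdjoint.cfcₙ.star_eq, ← hcomm.eq]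
  noncomm_ring

theorem abs_mul_one_sub_sq_div_le {δ : ℝ} (hδ : 0 < δ) (t : ℝ) :
    |t * (1 - t * (t / (t ^ 2 + δ ^ 2))) ^ 2| ≤ δ := by
  have hpos : 0 < t ^ 2 + δ ^ 2 := by positivity
  have hfactor : 1 - t * (t / (t ^ 2 + δ ^ 2)) = δ ^ 2 / (t ^ 2 + δ ^ 2) := by
    field_simp
    ring
  have hratio : δ ^ 2 / (t ^ 2 + δ ^ 2) ≤ 1 := by
    rw [div_le_one hpos]
    linarith [sq_nonneg t]
  have hAMGM : |t| * δ ≤ t ^ 2 + δ ^ 2 := by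
    nlinarith [sq_nonneg (|t| - δ), sq_abs t, mul_nonneg (abs_nonneg t) hδ.le]
  calc |t * (1 - t * (t / (t ^ 2 + δ ^ 2))) ^ 2|
      = |t| * δ / (t ^ 2 + δ ^ 2) * (δ ^ 2 / (t ^ 2 + δ ^ 2)) * δ := by
        rw [hfactor, abs_mul, abs_of_nonneg (sq_nonneg (δ ^ 2 / (t ^ 2 + δ ^ 2)))]
        ring
    _ ≤ 1 * 1 * δ := by
        gcongr
        exact (div_le_one hpos).2 hAMGM
    _ = δ := by ring

theorem mem_closure_range_mul_star_mul_self_mul {A : Type*} [NonUnitalCStarAlgebra A] (x : A) :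
    x ∈ closure (Set.range fun y ↦ x * (star x * x * y)) := by
  rw [Metric.mem_closure_range_iff]
  intro ε hε
  obtain ⟨δ, hδ, hδε⟩ : ∃ δ : ℝ, 0 < δ ∧ δ < ε ^ 2 := exists_between (by positivity)
  let k : ℝ → ℝ := fun t ↦ t / (t ^ 2 + δ ^ 2)
  have hk : Continuous k := continuous_id.div (by fun_prop) fun t ↦ by positivity
  have hmul : star x * x * cfcₙ k (star x * x) = cfcₙ (fun t ↦ t * k t) (star x * x) := by
    rw [cfcₙ_mul (fun t ↦ t) k (star x * x), cfcₙ_id' ℝ (star x * x)]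
  have hsq : ‖x - x * cfcₙ (fun t ↦ t * k t) (star x * x)‖ ^ 2 ≤ δ := by
    rw [sq, ← CStarRing.norm_star_mul_self,
      star_mul_self_sub_mul_cfcₙ x (by fun_prop) (zero_mul (k 0))]
    exact norm_cfcₙ_le fun t _ ↦ abs_mul_one_sub_sq_div_le hδ t
  refine ⟨cfcₙ k (star x * x), ?_⟩
  rw [dist_eq_norm, hmul]
  exact lt_of_pow_lt_pow_left₀ 2 hε.le (hsq.trans_lt hδε)

end FunctionalCalculus

namespace KM

variable {A : Type*} [NonUnitalCStarAlgebra A]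

/-- Cuntz subequivalence `a ≼ b` modulo `I`: for an ideal `I`, the image of `a` in the quotient by
`I` is Cuntz below the image of `b`. The quotient norm is encoded as the distance to `I`,
which takes the junk value `0` when `I` is empty. -/
def CuntzBelowMod (I : Set A) (a b : A) : Prop :=
  ∀ ε : ℝ, 0 < ε → ∃ x : A, Metric.infDist (a - star x * b * x) I < ε

theorem cuntzBelowMod_singleton_zero {a b : A} : CuntzBelowMod {0} a b ↔ CuntzBelow a b := by
  simp only [CuntzBelowMod, CuntzBelow, Metric.infDist_singleton, dist_zero_right]

namespace IsIdeal

variable {I J : Set A} {a b x y : A}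

theorem isClosed (hJ : IsIdeal J) : IsClosed J := hJ.2.1

theorem zero_mem (hJ : IsIdeal J) : 0 ∈ J := hJ.2.2.1

theorem add_mem (hJ : IsIdeal J) (hx : x ∈ J) (hy : y ∈ J) : x + y ∈ J := hJ.2.2.2.1 x hx y hy

theorem mul_mem_left (hJ : IsIdeal J) (y : A) (hx : x ∈ J) : y * x ∈ J :=
  (hJ.2.2.2.2.2 x hx y trivial).1

theorem mul_mem_right (hJ : IsIdeal J) (y : A) (hx : x ∈ J) : x * y ∈ J :=
  (hJ.2.2.2.2.2 x hx y trivial).2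

theorem inter (hI : IsIdeal I) (hJ : IsIdeal J) : IsIdeal (I ∩ J) := by
  obtain ⟨-, hIclosed, hI₀, hIadd, hIsmul, hImul⟩ := hI
  obtain ⟨-, hJclosed, hJ₀, hJadd, hJsmul, hJmul⟩ := hJ
  exact ⟨Set.subset_univ _, hIclosed.inter hJclosed, ⟨hI₀, hJ₀⟩,
    fun x hx y hy ↦ ⟨hIadd x hx.1 y hy.1, hJadd x hx.2 y hy.2⟩,
    fun c x hx ↦ ⟨hIsmul c x hx.1, hJsmul c x hx.2⟩,
    fun x hx c hc ↦ ⟨⟨(hImul x hx.1 c hc).1, (hJmul x hx.2 c hc).1⟩,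
      ⟨(hImul x hx.1 c hc).2, (hJmul x hx.2 c hc).2⟩⟩⟩

theorem star_mul_self_mem_iff (hJ : IsIdeal J) : star x * x ∈ J ↔ x ∈ J := by
  refine ⟨fun hx ↦ ?_, hJ.mul_mem_left (star x)⟩
  have hrange : Set.range (fun y ↦ x * (star x * x * y)) ⊆ J :=
    Set.range_subset_iff.2 fun y ↦ hJ.mul_mem_left x (hJ.mul_mem_right y hx)
  exact closure_minimal hrange hJ.isClosed (mem_closure_range_mul_star_mul_self_mul x)

theorem mem_of_cuntzBelowMod (hJ : IsIdeal J) (hI : I.Nonempty) (hIJ : I ⊆ J) (hb : b ∈ J)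
    (hab : CuntzBelowMod I a b) : a ∈ J := by
  rw [← hJ.isClosed.closure_eq, Metric.mem_closure_iff]
  intro ε hε
  obtain ⟨x, hx⟩ := hab ε hε
  obtain ⟨y, hy, hxy⟩ := (Metric.infDist_lt_iff hI).1 hx
  have hxb : star x * b * x ∈ J := hJ.mul_mem_right x (hJ.mul_mem_left (star x) hb)
  refine ⟨star x * b * x + y, hJ.add_mem hxb (hIJ hy), ?_⟩
  rwa [dist_eq_norm, ← sub_sub, ← dist_eq_norm]

theorem mem_of_cuntzBelow (hJ : IsIdeal J) (hb : b ∈ J) (hab : CuntzBelow a b) : a ∈ J :=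
  hJ.mem_of_cuntzBelowMod (Set.singleton_nonempty 0) (Set.singleton_subset_iff.2 hJ.zero_mem) hb
    (cuntzBelowMod_singleton_zero.2 hab)

end IsIdeal

section Support

variable [PartialOrder A] {F I J J₁ J₂ : Set A} {b : A}

theorem Supports.exists_mem_inter_cuntzBelow (hF : Supports F) (hJ : IsIdeal J) (hb : b ∈ J)
    (hb_nonneg : 0 ≤ b) (hb_ne : b ≠ 0) : ∃ a ∈ F ∩ J, a ≠ 0 ∧ CuntzBelow a b := by
  obtain ⟨a, haF, ha_ne, hab⟩ := hF b hb_nonneg hb_ne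
  exact ⟨a, ⟨haF, hJ.mem_of_cuntzBelow hb hab⟩, ha_ne, hab⟩

theorem ResiduallySupports.exists_mem_inter_cuntzBelowMod (hF : ResiduallySupports F)
    (hJ : IsIdeal J) (hI : IsIdeal I) (hIJ : I ⊆ J) (hb : b ∈ J) (hb_nonneg : 0 ≤ b)
    (hbI : b ∉ I) : ∃ a ∈ F ∩ J, a ∉ I ∧ CuntzBelowMod I a b := by
  obtain ⟨a, haF, haI, hcuntz⟩ := hF I hI b trivial hb_nonneg hbI
  have hab : CuntzBelowMod I a b := fun ε hε ↦ (hcuntz ε hε).imp fun _ hx ↦ hx.2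
  exact ⟨a, ⟨haF, hJ.mem_of_cuntzBelowMod ⟨0, hI.zero_mem⟩ hIJ hb hab⟩, haI, hab⟩

variable [StarOrderedRing A]

theorem Supports.exists_mem_inter_ne_zero (hF : Supports F) (hJ : IsIdeal J)
    (hJ_ne : ∃ x ∈ J, x ≠ 0) : ∃ a ∈ F ∩ J, a ≠ 0 := by
  obtain ⟨x, hx, hx_ne⟩ := hJ_ne
  obtain ⟨a, ha, ha_ne, -⟩ := hF.exists_mem_inter_cuntzBelow hJ (hJ.mul_mem_left (star x) hx)
    (star_mul_self_nonneg x) ((CStarRing.star_mul_self_ne_zero_iff x).2 hx_ne)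
  exact ⟨a, ha, ha_ne⟩

theorem ResiduallySupports.subset_of_inter_subset (hF : ResiduallySupports F) (hJ₁ : IsIdeal J₁)
    (hJ₂ : IsIdeal J₂) (h : J₁ ∩ F ⊆ J₂) : J₁ ⊆ J₂ := by
  intro x hx₁
  by_contra hx₂
  have hJ : IsIdeal (J₁ ∩ J₂) := hJ₁.inter hJ₂
  have hxJ : star x * x ∉ J₁ ∩ J₂ := fun hx ↦ hx₂ (hJ.star_mul_self_mem_iff.1 hx).2
  obtain ⟨a, ⟨haF, ha₁⟩, haJ, -⟩ := hF.exists_mem_inter_cuntzBelowMod hJ₁ hJ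
    Set.inter_subset_left (hJ₁.mul_mem_left (star x) hx₁) (star_mul_self_nonneg x) hxJ
  exact haJ ⟨ha₁, h ⟨ha₁, haF⟩⟩

theorem ResiduallySupports.separatesIdeals (hF : ResiduallySupports F) : SeparatesIdeals F :=
  fun _ _ hJ₁ hJ₂ h ↦
    (hF.subset_of_inter_subset hJ₁ hJ₂ (h.subset.trans Set.inter_subset_left)).antisymm
      (hF.subset_of_inter_subset hJ₂ hJ₁ (h.superset.trans Set.inter_subset_left))

end Support

end KM

/-- (1) If `F` supports `B`, then for every ideal `J` and nonzero `b ∈ J⁺` there is a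
nonzero `a ∈ F ∩ J` with `a ≼ b`; in particular every nonzero ideal contains a nonzero
element of `F`.  (2) If `F` residually supports `B`, then `F ∩ J` residually supports `J`
for every ideal `J`, and `F` separates the ideals of `B`. -/
theorem stmt5 (F : Set B) :
    (Supports F →
      (∀ J : Set B, IsIdeal J → ∀ b ∈ J, 0 ≤ b → b ≠ 0 →
          ∃ a ∈ F ∩ J, a ≠ 0 ∧ CuntzBelow a b) ∧
        (∀ J : Set B, IsIdeal J → (∃ x ∈ J, x ≠ 0) → ∃ a ∈ F ∩ J, a ≠ 0)) ∧
    (ResiduallySupports F →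
      (∀ J : Set B, IsIdeal J → ∀ I : Set B, IsIdeal I → I ⊆ J →
          ∀ b ∈ J, 0 ≤ b → b ∉ I →
            ∃ a ∈ F ∩ J, a ∉ I ∧ ∀ ε : ℝ, 0 < ε → ∃ x : B,
              Metric.infDist (a - star x * b * x) I < ε) ∧
        (∀ J₁ J₂ : Set B, IsIdeal J₁ → IsIdeal J₂ → J₁ ≠ J₂ → J₁ ∩ F ≠ J₂ ∩ F)) := by
  refine ⟨fun hF ↦ ⟨?_, ?_⟩, fun hF ↦ ⟨?_, ?_⟩⟩
  · exact fun J hJ b hb ↦ hF.exists_mem_inter_cuntzBelow hJ hb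
  · exact fun J hJ ↦ hF.exists_mem_inter_ne_zero hJ
  · exact fun J hJ I hI hIJ b hb ↦ hF.exists_mem_inter_cuntzBelowMod hJ hI hIJ hb
  · exact fun J₁ J₂ hJ₁ hJ₂ ↦ mt (hF.separatesIdeals J₁ J₂ hJ₁ hJ₂)
end
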